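/- arXiv:1102.1105 — 4 statements merged into one kernel-verified Lean document; each statement's English description precedes it below -/
import Mathlib

section
/- Let R be an associative unital ring and let α₁,…,α_k, β₁,…,β_k ∈ R be an odd family, i.e. x·y = −y·x for every two members x, y of the list α₁,…,α_k, β₁,…,β_k and t·t = 0 for every member t. Let A be the k×k matrix over R with entries A_{ij} = α_i·β_j and set a = α₁·β₁ + ⋯ + α_k·β_k. Then: (i) any two entries of A commute with each other, and a commutes with every entry of A; (ii) A·A = −a•A, where a•A denotes the matrix with entries a·A_{ij}; (iii) a^{k+1} = 0. -/
/-!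
A product of two odd elements commutes with every odd element. The matrix `A = α βᵀ` has rank one,
so `A² = α (βᵀ α) βᵀ`, where the scalar `βᵀ α = -(αᵀ β) = -a` commutes with `α` and can be pulled
out. Finally `a` is a sum of `k` commuting elements of square zero, so every monomial in the
expansion of `a ^ (k + 1)` repeats one of them.
-/

open Matrix

section Anticommute

variable {R : Type*} [Semigroup R] [HasDistribNeg R] {x y z : R}

theorem commute_mul_of_anticommute (hxz : x * z = -(z * x)) (hyz : y * z = -(z * y)) :
    Commute (x * y) z :=
  calc x * y * z = -(x * z * y) := by rw [mul_assoc, hyz, mul_neg, mul_assoc]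
    _ = z * (x * y) := by rw [hxz, neg_mul, neg_neg, mul_assoc]

theorem mul_mul_mul_comm_of_anticommute (hyz : y * z = -(z * y)) (w : R) :
    x * y * (z * w) = -(x * z * (y * w)) :=
  calc x * y * (z * w) = x * (y * z) * w := by simp only [mul_assoc]
    _ = -(x * z * (y * w)) := by simp only [hyz, mul_neg, neg_mul, mul_assoc]

end Anticommute

theorem sum_pow_eq_zero_of_commute {R ι : Type*} [Semiring R] (s : Finset ι) (f : ι → R)
    (n : ι → ℕ) (hcomm : (s : Set ι).Pairwise fun i j ↦ Commute (f i) (f j))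
    (hf : ∀ i ∈ s, f i ^ (n i + 1) = 0) :
    (∑ i ∈ s, f i) ^ ((∑ i ∈ s, n i) + 1) = 0 := by
  induction s using Finset.cons_induction with
  | empty => simp
  | cons i s hi ih =>
    rw [Finset.sum_cons, Finset.sum_cons]
    have hsum : (∑ j ∈ s, f j) ^ ((∑ j ∈ s, n j) + 1) = 0 :=
      ih (hcomm.mono (by simp)) fun j hj ↦ hf j (Finset.mem_cons_of_mem hj)
    have hcomm_sum : Commute (f i) (∑ j ∈ s, f j) := Commute.sum_right _ _ _ fun j hj ↦
      hcomm (by simp) (by simp [hj]) (ne_of_mem_of_not_mem hj hi).symm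
    exact hcomm_sum.add_pow_eq_zero_of_add_le_succ_of_pow_eq_zero
      (hf i (Finset.mem_cons_self i s)) hsum (by lia)

theorem dotProduct_eq_neg_of_anticommute {R ι : Type*} [Fintype ι] [NonUnitalNonAssocRing R]
    {v w : ι → R} (h : ∀ i, v i * w i = -(w i * v i)) : v ⬝ᵥ w = -(w ⬝ᵥ v) := by
  simp only [dotProduct, h, Finset.sum_neg_distrib]

theorem vecMulVec_smul_of_commute {R m n : Type*} [Semigroup R] {c : R} {v : m → R}
    (h : ∀ i, Commute c (v i)) (w : n → R) : vecMulVec v (c • w) = c • vecMulVec v w :=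
  Matrix.ext fun i j ↦ (h i).symm.left_comm (w j)

theorem vecMulVec_mul_self_of_anticommute {R ι : Type*} [Fintype ι] [NonUnitalRing R]
    {v w : ι → R} (hanti : ∀ i, w i * v i = -(v i * w i)) (hcomm : ∀ i, Commute (v ⬝ᵥ w) (v i)) :
    vecMulVec v w * vecMulVec v w = -((v ⬝ᵥ w) • vecMulVec v w) :=
  calc vecMulVec v w * vecMulVec v w = vecMulVec v ((w ⬝ᵥ v) • w) := vecMulVec_mul_vecMulVec ..
    _ = vecMulVec v (-((v ⬝ᵥ w) • w)) := by
      rw [dotProduct_eq_neg_of_anticommute hanti]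
      exact congrArg (vecMulVec v) (funext fun _ ↦ neg_mul _ _)
    _ = -((v ⬝ᵥ w) • vecMulVec v w) := by rw [vecMulVec_neg, vecMulVec_smul_of_commute hcomm]

theorem dotProduct_pow_card_add_one_eq_zero {R ι : Type*} [Fintype ι] [Ring R] {v w : ι → R}
    (hanti : ∀ i, w i * v i = -(v i * w i))
    (hcomm : Pairwise fun i j ↦ Commute (v i * w i) (v j * w j)) (hsq : ∀ i, v i * v i = 0) :
    (v ⬝ᵥ w) ^ (Fintype.card ι + 1) = 0 := by
  have hterm (i : ι) : (v i * w i) ^ (1 + 1) = 0 := by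
    rw [one_add_one_eq_two, sq, mul_mul_mul_comm_of_anticommute (hanti i), hsq, zero_mul, neg_zero]
  simpa [dotProduct] using sum_pow_eq_zero_of_commute Finset.univ (fun i ↦ v i * w i) (fun _ ↦ 1)
    (hcomm.set_pairwise _) fun i _ ↦ hterm i

theorem bott_chern_odd_family_matrix_general
    {R ι : Type*} [Ring R] [Fintype ι] (α β : ι → R)
    (hodd : ∀ x ∈ Set.range α ∪ Set.range β, ∀ y ∈ Set.range α ∪ Set.range β,
      x * y = -(y * x))
    (hsq : ∀ i, α i * α i = 0)
    (A : Matrix ι ι R) (hA : ∀ i j, A i j = α i * β j)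
    (a : R) (ha : a = ∑ i, α i * β i) :
    (∀ i j i' j', Commute (A i j) (A i' j')) ∧
    (∀ i j, Commute a (A i j)) ∧
    A * A = -(a • A) ∧
    a ^ (Fintype.card ι + 1) = 0 := by
  obtain rfl : A = vecMulVec α β := Matrix.ext hA
  obtain rfl : a = α ⬝ᵥ β := ha
  have hα (i : ι) : α i ∈ Set.range α ∪ Set.range β := .inl ⟨i, rfl⟩
  have hβ (i : ι) : β i ∈ Set.range α ∪ Set.range β := .inr ⟨i, rfl⟩
  have entry_comm (i j : ι) {z : R} (hz : z ∈ Set.range α ∪ Set.range β) :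
      Commute (α i * β j) z :=
    commute_mul_of_anticommute (hodd _ (hα i) z hz) (hodd _ (hβ j) z hz)
  have entries_comm (i j i' j' : ι) : Commute (α i * β j) (α i' * β j') :=
    (entry_comm i j (hα i')).mul_right (entry_comm i j (hβ j'))
  have dot_comm {z : R} (hz : z ∈ Set.range α ∪ Set.range β) : Commute (α ⬝ᵥ β) z :=
    Commute.sum_left _ _ _ fun l _ ↦ entry_comm l l hz
  have hanti (i : ι) : β i * α i = -(α i * β i) := hodd _ (hβ i) _ (hα i)
  exact ⟨entries_comm, fun i j ↦ (dot_comm (hα i)).mul_right (dot_comm (hβ j)),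
    vecMulVec_mul_self_of_anticommute hanti fun i ↦ dot_comm (hα i),
    dotProduct_pow_card_add_one_eq_zero hanti (fun i j _ ↦ entries_comm i i j j) hsq⟩

/-- Lemma 3.1 of the paper, setup part.
If `α₁,…,α_k, β₁,…,β_k` form an odd family in an associative unital ring `R`
(any two members anticommute and each member squares to zero), `A` is the
`k × k` matrix with entries `A i j = α i * β j` and `a = ∑ i, α i * β i`, then:
(i) any two entries of `A` commute and `a` commutes with every entry of `A`;
(ii) `A * A = -(a • A)`; (iii) `a ^ (k+1) = 0`. -/
theorem bott_chern_odd_family_matrix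
    {R : Type*} [Ring R] (k : ℕ) (α β : Fin k → R)
    (hodd : ∀ x ∈ Set.range α ∪ Set.range β, ∀ y ∈ Set.range α ∪ Set.range β,
      x * y = -(y * x))
    (hsq : ∀ x ∈ Set.range α ∪ Set.range β, x * x = 0)
    (A : Matrix (Fin k) (Fin k) R) (hA : ∀ i j, A i j = α i * β j)
    (a : R) (ha : a = ∑ i, α i * β i) :
    (∀ i j i' j', Commute (A i j) (A i' j')) ∧
    (∀ i j, Commute a (A i j)) ∧
    A * A = -(a • A) ∧
    a ^ (k + 1) = 0 := by
  simpa only [Fintype.card_fin] using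
    bott_chern_odd_family_matrix_general α β hodd (fun i ↦ hsq _ (.inl ⟨i, rfl⟩)) A hA a ha
end

section
/- Let R be a commutative ring, k ≥ 1, let A be a k×k matrix over R, let a = trace(A), and assume A·A = −a•A and a^{k+1} = 0. Then for every λ ∈ R the matrix 1 − λ•A is invertible, with inverse 1 + c•A where c = Σ_{j=0}^{k} (−1)^j λ^{j+1} a^j; that is, (1 − λ•A)·(1 + c•A) = 1 = (1 + c•A)·(1 − λ•A). -/
/-!
The relation `A * A = -(a • A)` makes every power `(lam • A) ^ (j + 1)` the scalar multiple
`((-1) ^ j * lam ^ (j + 1) * a ^ j) • A` of `A`. The claimed inverse is therefore the Neumann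
series of `1 - lam • A`, which terminates as soon as `a ^ n • A = 0`.
-/

theorem pow_succ_eq_pow_smul_of_mul_self_eq_smul {R M : Type*} [Monoid R] [Monoid M]
    [MulAction R M] [IsScalarTower R M M] {r : R} {x : M} (hx : x * x = r • x) (n : ℕ) :
    x ^ (n + 1) = r ^ n • x := by
  induction n with
  | zero => simp
  | succ n ih => rw [pow_succ, ih, smul_mul_assoc, hx, smul_smul, ← pow_succ]

section NeumannSeries

variable {R S : Type*} [CommRing R] [Ring S] [Algebra R S] {a : R} {x : S}

theorem smul_pow_succ_of_mul_self_eq_neg_smul (hx : x * x = -(a • x)) (lam : R) (n : ℕ) :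
    (lam • x) ^ (n + 1) = ((-1) ^ n * lam ^ (n + 1) * a ^ n) • x := by
  rw [← neg_smul] at hx
  rw [smul_pow, pow_succ_eq_pow_smul_of_mul_self_eq_smul hx, smul_smul, neg_pow a]
  ring_nf

theorem geom_sum_smul_of_mul_self_eq_neg_smul (hx : x * x = -(a • x)) (lam : R) (n : ℕ) :
    ∑ j ∈ Finset.range (n + 1), (lam • x) ^ j =
      1 + (∑ j ∈ Finset.range n, (-1 : R) ^ j * lam ^ (j + 1) * a ^ j) • x := by
  simp only [Finset.sum_range_succ', smul_pow_succ_of_mul_self_eq_neg_smul hx, Finset.sum_smul,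
    pow_zero, add_comm]

theorem bott_chern_inverse_formula_general {n : ℕ} (hx : x * x = -(a • x)) (ha : a ^ n • x = 0)
    (lam : R) :
    (1 - lam • x) * (1 + (∑ j ∈ Finset.range n, (-1 : R) ^ j * lam ^ (j + 1) * a ^ j) • x) = 1 ∧
    (1 + (∑ j ∈ Finset.range n, (-1 : R) ^ j * lam ^ (j + 1) * a ^ j) • x) * (1 - lam • x) = 1 := by
  have hpow : (lam • x) ^ (n + 1) = 0 := by
    rw [smul_pow_succ_of_mul_self_eq_neg_smul hx, mul_smul, ha, smul_zero]
  rw [← geom_sum_smul_of_mul_self_eq_neg_smul hx]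
  constructor
  · rw [mul_neg_geom_sum, hpow, sub_zero]
  · rw [geom_sum_mul_neg, hpow, sub_zero]

end NeumannSeries

/-- Lemma 3.1 of the paper, inverse formula.
Over a commutative ring `R`, if `A` is a `k × k` matrix (`k ≥ 1`) with
`a = trace A`, `A * A = -(a • A)` and `a ^ (k+1) = 0`, then for every `λ ∈ R`
the matrix `1 - λ • A` is invertible with inverse
`1 + (∑_{j=0}^{k} (-1)^j λ^{j+1} a^j) • A`. -/
theorem bott_chern_inverse_formula
    {R : Type*} [CommRing R] (k : ℕ) (hk : 1 ≤ k)
    (A : Matrix (Fin k) (Fin k) R)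
    (h1 : A * A = -(A.trace • A)) (h2 : A.trace ^ (k + 1) = 0) (lam : R) :
    (1 - lam • A) *
        (1 + (∑ j ∈ Finset.range (k + 1), (-1 : R) ^ j * lam ^ (j + 1) * A.trace ^ j) • A)
      = 1 ∧
    (1 + (∑ j ∈ Finset.range (k + 1), (-1 : R) ^ j * lam ^ (j + 1) * A.trace ^ j) • A) *
        (1 - lam • A)
      = 1 := by
  exact bott_chern_inverse_formula_general h1 (by rw [h2, zero_smul]) lam
end

section
/- Let R be a commutative ring which is a ℚ-algebra, k ≥ 1, let A be a k×k matrix over R, let a = trace(A), and assume A·A = −a•A and a^{k+1} = 0. Then for every λ ∈ R, det(1 − λ•A) = Σ_{j=0}^{k} (−1)^j λ^j a^j; equivalently, det(1 − λ•A)·(1 + λ·a) = 1. -/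
/-!
Put `P(X) = det (1 - X A)` and `a = trace A`. Jacobi's formula gives
`P' = -trace (adj (1 - X A) A)`. Since `A² = -a A`, we have `A (1 - X A) = (1 + a X) A`, hence
`(1 + a X) adj (1 - X A) A = P A`, and taking traces, `(1 + a X) P' = -a P`. So `(1 + a X) P` has
zero derivative and, `R` being torsion-free, equals its constant term `1`. Hence the coefficient of
`X ^ j` in `P` is `(-a) ^ j`, while `P` has degree at most the size of `A`.
-/

section

open Matrix Polynomial

variable {n R : Type*} [Fintype n] [DecidableEq n] [CommRing R]

theorem derivative_det_eq_sum_det_updateCol (M : Matrix n n R[X]) :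
    derivative M.det = ∑ i, (M.updateCol i fun j ↦ derivative (M j i)).det := by
  simp only [det_apply, derivative_sum, derivative_smul, derivative_prod_finset,
    Finset.smul_sum]
  rw [Finset.sum_comm]
  refine Finset.sum_congr rfl fun i _ ↦ Finset.sum_congr rfl fun σ _ ↦ ?_
  rw [← Finset.prod_erase_mul _ _ (Finset.mem_univ i), updateCol_self]
  congr 2
  exact Finset.prod_congr rfl fun j hj ↦ (updateCol_ne (Finset.ne_of_mem_erase hj)).symm

theorem derivative_det_eq_trace_adjugate_mul (M : Matrix n n R[X]) :
    derivative M.det = (M.adjugate * M.map derivative).trace := by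
  rw [derivative_det_eq_sum_det_updateCol, trace]
  refine Finset.sum_congr rfl fun i _ ↦ ?_
  rw [← cramer_apply, cramer_eq_adjugate_mulVec]
  rfl

theorem derivative_charpolyRev (A : Matrix n n R) :
    derivative A.charpolyRev =
      -((1 - (X : R[X]) • A.map C).adjugate * A.map C).trace := by
  have hder : (1 - (X : R[X]) • A.map C).map derivative = -A.map C := by
    ext1 i j
    simp [one_apply, apply_ite derivative]
  rw [charpolyRev, derivative_det_eq_trace_adjugate_mul, hder, mul_neg, trace_neg]

theorem one_sub_mul_smul_adjugate_mul {A : Matrix n n R} {c : R} (hA : A * A = c • A) (s : R) :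
    (1 - s * c) • ((1 - s • A).adjugate * A) = (1 - s • A).det • A := by
  have hcomm : (1 - s • A) * A = (1 - s * c) • A := by
    rw [sub_mul, one_mul, smul_mul_assoc, hA, smul_smul, sub_smul, one_smul]
  rw [← mul_smul_comm, ← hcomm, ← mul_assoc, adjugate_mul, smul_mul_assoc, one_mul]

theorem one_sub_mul_derivative_charpolyRev {A : Matrix n n R} {c : R} (hA : A * A = c • A) :
    (1 - X * C c) * derivative A.charpolyRev = -(C A.trace * A.charpolyRev) := by
  have hAC : A.map C * A.map C = C c • A.map C := by
    rw [← Matrix.map_mul, hA]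
    ext1 i j
    simp
  have htrace := congrArg trace (one_sub_mul_smul_adjugate_mul hAC (X : R[X]))
  rw [trace_smul, trace_smul, smul_eq_mul, smul_eq_mul, ← charpolyRev,
    ← AddMonoidHom.map_trace C A] at htrace
  rw [derivative_charpolyRev, mul_neg, htrace, mul_comm]

theorem charpolyRev_mul_one_add_C_trace_mul_X [IsAddTorsionFree R] {A : Matrix n n R}
    (hA : A * A = -(A.trace • A)) : A.charpolyRev * (1 + C A.trace * X) = 1 := by
  have hode := one_sub_mul_derivative_charpolyRev (hA.trans (neg_smul _ _).symm)
  have hder : derivative (A.charpolyRev * (1 + C A.trace * X)) = 0 := by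
    simp only [derivative_mul, derivative_add, derivative_one, derivative_C, derivative_X]
    rw [C_neg] at hode
    linear_combination hode
  rw [eq_C_of_derivative_eq_zero hder, coeff_zero_eq_eval_zero]
  simp

theorem coeff_eq_neg_pow_of_mul_one_add_C_mul_X_eq_one {S : Type*} [Ring S] {p : S[X]} {a : S}
    (hp : p * (1 + C a * X) = 1) (j : ℕ) : p.coeff j = (-a) ^ j := by
  rw [mul_add, mul_one, ← mul_assoc] at hp
  induction j with
  | zero => simpa using congrArg (coeff · 0) hp
  | succ j ih =>
    have hcoeff : p.coeff (j + 1) + p.coeff j * a = 0 := by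
      simpa [coeff_one] using congrArg (coeff · (j + 1)) hp
    rw [eq_neg_of_add_eq_zero_left hcoeff, ih, pow_succ, mul_neg]

theorem natDegree_charpolyRev_le (A : Matrix n n R) :
    A.charpolyRev.natDegree ≤ Fintype.card n := by
  nontriviality R
  rw [← reverse_charpoly, ← A.charpoly_natDegree_eq_dim]
  exact reverse_natDegree_le _

theorem eval_charpolyRev_eq_det (A : Matrix n n R) (s : R) :
    A.charpolyRev.eval s = (1 - s • A).det := by
  rw [charpolyRev, ← coe_evalRingHom, RingHom.map_det]
  congr 1
  ext i j
  simp [one_apply, apply_ite (eval s), mul_comm (A i j)]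

theorem bott_chern_det_formula_general [IsAddTorsionFree R] (A : Matrix n n R)
    (hA : A * A = -(A.trace • A)) (s : R) :
    (1 - s • A).det =
      ∑ j ∈ Finset.range (Fintype.card n + 1), (-1 : R) ^ j * s ^ j * A.trace ^ j ∧
    (1 - s • A).det * (1 + s * A.trace) = 1 := by
  have hinv := charpolyRev_mul_one_add_C_trace_mul_X hA
  rw [← eval_charpolyRev_eq_det]
  constructor
  · rw [eval_eq_sum_range' (Nat.lt_succ_of_le (natDegree_charpolyRev_le A))]
    refine Finset.sum_congr rfl fun j _ ↦ ?_
    rw [coeff_eq_neg_pow_of_mul_one_add_C_mul_X_eq_one hinv, neg_pow, mul_right_comm]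
  · simpa [mul_comm s] using congrArg (eval s) hinv

end

/-- Lemma 3.1 of the paper, determinant formula.
Over a commutative `ℚ`-algebra `R`, if `A` is a `k × k` matrix (`k ≥ 1`) with
`a = trace A`, `A * A = -(a • A)` and `a ^ (k+1) = 0`, then for every `λ ∈ R`,
`det (1 - λ • A) = ∑_{j=0}^{k} (-1)^j λ^j a^j`; equivalently
`det (1 - λ • A) * (1 + λ a) = 1`. -/
theorem bott_chern_det_formula
    {R : Type*} [CommRing R] [Algebra ℚ R] (k : ℕ) (hk : 1 ≤ k)
    (A : Matrix (Fin k) (Fin k) R)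
    (h1 : A * A = -(A.trace • A)) (h2 : A.trace ^ (k + 1) = 0) (lam : R) :
    (1 - lam • A).det = ∑ j ∈ Finset.range (k + 1), (-1 : R) ^ j * lam ^ j * A.trace ^ j ∧
    (1 - lam • A).det * (1 + lam * A.trace) = 1 := by
  have : IsAddTorsionFree R := .of_module_rat R
  simpa only [Fintype.card_fin] using bott_chern_det_formula_general A h1 lam
end

section
/- In the graded setting described in the context, let r ≥ 2, let E ∈ A₀ be invertible, let f₁,…,f_{r−1}, p₁,…,p_{r−1} ∈ A₀, let h be the r×r matrix over A₀ with h_{ij} = δ_{ij} for i,j ≤ r−1, h_{i,r} = p_i and h_{r,i} = f_i for i ≤ r−1, and h_{r,r} = Σ_{k=1}^{r−1} f_k·p_k + E (so that det h = E and h is invertible), and set Θ = ∂̄(h^{−1}·∂h) (an r×r matrix with entries in A₂) and U = E^{−1}·Σ_{i=1}^{r−1} ∂f_i·∂̄p_i ∈ A₂ (so that U^r = 0). Then for every λ ∈ ℚ: det(1 + λ·Θ) = 1 + λ·∂̄(E^{−1}·∂E) − λ²·∂̄(∂U)·Σ_{k=0}^{r−1} λ^k U^k − λ³·(∂̄U)·(∂U)·Σ_{k=0}^{r−1}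 (k+1)·λ^k U^k. Equivalently, writing c_k for the coefficient of λ^k in det(1 + λ·Θ): c₁ = ∂̄(E^{−1}·∂E) and c_k = −(1/(k−1))·∂̄(∂(U^{k−1})) for 2 ≤ k ≤ r. -/
/-- The determinant of a square matrix over a (possibly noncommutative) ring,
defined by the Leibniz formula with the entries multiplied in the row order
`0, 1, …, m-1` (the statement applies it to matrices whose entries pairwise
commute, so the order is immaterial there). -/
def ndet {A : Type*} [Ring A] {m : ℕ} (M : Matrix (Fin m) (Fin m) A) : A :=
  ∑ σ : Equiv.Perm (Fin m),
    ((Equiv.Perm.sign σ : ℤ)) • ((List.finRange m).map fun i => M (σ i) i).prod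

/-- The `(m+1) × (m+1)` matrix of Lemma 3.2 of the paper: identity in the
upper-left `m × m` block, last column `p`, last row `f`, and lower-right
corner `∑ k, f k * p k + E`. -/
def hMat {A : Type*} [Ring A] (E : A) {m : ℕ} (f p : Fin m → A) :
    Matrix (Fin (m + 1)) (Fin (m + 1)) A :=
  Matrix.of fun i j =>
    if hi : (i : ℕ) < m then
      if _hj : (j : ℕ) < m then (if (i : ℕ) = (j : ℕ) then 1 else 0)
      else p ⟨i, hi⟩
    else
      if hj : (j : ℕ) < m then f ⟨j, hj⟩
      else (∑ k, f k * p k) + E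

/-!
Write `h = [[1, 0], [f, E]] * [[1, p], [0, 1]]`. Conjugation by the unipotent factor
`[[1, p], [0, 1]]`, a gauge transformation, turns the curvature `∂̄(h⁻¹ ∂h)` into
`[[-q α, ∂̄∂p - q β], [∂̄α, ∂̄β - α q]]`, where `α = E⁻¹ ∂f`, `β = E⁻¹ ∂E` and `q = ∂̄p`.
Its large block is minus the rank one matrix `T = q α`, which satisfies `T² = U T`, while
`tr T = -U` because the entries of `q` and `α` are odd. By Jacobi's formula the determinant
`det (1 - λ T)` is therefore not `1 - λ U`, as for commuting entries, but its inverse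
`∑ λᵏ Uᵏ`, and a Schur complement gives the remaining factor.
-/

section Determinants

open Polynomial

variable {ι κ Z : Type*} [Fintype ι] [DecidableEq ι] [CommRing Z]

theorem derivative_det (M : Matrix ι ι Z[X]) :
    derivative M.det = (M.adjugate * M.map derivative).trace := by
  have hcol (i : ι) : (M.adjugate * M.map derivative) i i =
      (M.updateCol i fun j => derivative (M j i)).det := by
    rw [← Matrix.cramer_apply, Matrix.cramer_eq_adjugate_mulVec]
    rfl
  simp only [Matrix.trace, Matrix.diag_apply, hcol, Matrix.det_apply, derivative_sum]
  rw [Finset.sum_comm]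
  refine Finset.sum_congr rfl fun σ _ => ?_
  rw [← Finset.smul_sum, Units.smul_def, Units.smul_def, derivative_smul,
    derivative_prod_finset]
  congr 1
  refine Finset.sum_congr rfl fun i hi => ?_
  rw [← Finset.prod_erase_mul _ _ hi, Matrix.updateCol_self]
  congr 1
  exact Finset.prod_congr rfl fun j hj =>
    (Matrix.updateCol_ne (Finset.ne_of_mem_erase hj)).symm

-- Jacobi's formula, with `adj (1 - X T)` read off from `(1 - X T) (1 + X t + X T) = 1 + X t`.
theorem derivative_det_one_sub_X_smul {T : Matrix ι ι Z} (hT : T * T = -T.trace • T) :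
    (1 + X * C T.trace) * derivative (1 - (X : Z[X]) • T.map C).det
      = -(C T.trace * (1 - (X : Z[X]) • T.map C).det) := by
  set t := T.trace with ht
  set S : Matrix ι ι Z[X] := T.map C with hS
  set M : Matrix ι ι Z[X] := 1 - (X : Z[X]) • S with hM
  have hSS : S * S = -C t • S := by
    rw [hS, ← Matrix.map_mul, hT]
    ext i j
    simp
  have htrS : S.trace = C t := by
    simp [hS, ht, Matrix.trace]
  have hfactor : M * ((1 + X * C t) • 1 + (X : Z[X]) • S) = (1 + X * C t) • 1 := by
    simp only [hM, sub_mul, mul_add, one_mul, Matrix.mul_smul, Matrix.smul_mul, mul_one, hSS]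
    module
  have hadj : (1 + X * C t) • M.adjugate = M.det • ((1 + X * C t) • 1 + (X : Z[X]) • S) := by
    calc (1 + X * C t) • M.adjugate
        = M.adjugate * (M * ((1 + X * C t) • 1 + (X : Z[X]) • S)) := by rw [hfactor]; simp
      _ = M.det • ((1 + X * C t) • 1 + (X : Z[X]) • S) := by
          rw [← mul_assoc, Matrix.adjugate_mul, Matrix.smul_mul, one_mul]
  have hderiv : M.map derivative = -S := by
    ext i j : 1
    simp [hM, hS, Matrix.one_apply, apply_ite derivative]
  calc (1 + X * C t) * derivative M.det
      = -(((1 + X * C t) • M.adjugate) * S).trace := by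
        rw [derivative_det, hderiv]
        simp
    _ = -(C t * M.det) := by
        simp only [hadj, Matrix.smul_mul, add_mul, one_mul, hSS, Matrix.trace_smul,
          Matrix.trace_add, htrS, smul_eq_mul]
        ring

theorem det_one_sub_mul_one_add_trace [IsAddTorsionFree Z] {T : Matrix ι ι Z}
    (hT : T * T = -T.trace • T) : (1 - T).det * (1 + T.trace) = 1 := by
  set F : Z[X] := (1 - (X : Z[X]) • T.map C).det * (1 + X * C T.trace) with hF
  have hderiv : derivative F = 0 := by
    simp only [hF, derivative_mul, derivative_add, derivative_one, derivative_X, derivative_C]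
    linear_combination derivative_det_one_sub_X_smul hT
  have heval (x : Z) : F.eval x = (1 - x • T).det * (1 + x * T.trace) := by
    have hmap : (evalRingHom x).mapMatrix (1 - (X : Z[X]) • T.map C) = 1 - x • T := by
      ext i j
      simp [Matrix.one_apply, apply_ite (eval x), mul_comm x]
    rw [hF, eval_mul, ← coe_evalRingHom, RingHom.map_det, hmap]
    simp [mul_comm x]
  calc (1 - T).det * (1 + T.trace) = F.eval 1 := by simp [heval]
    _ = F.eval 0 := by rw [eq_C_of_derivative_eq_zero hderiv, eval_C, eval_C]
    _ = 1 := by simp [heval]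

theorem det_fromBlocks_one_sub [Fintype κ] [DecidableEq κ] [IsAddTorsionFree Z]
    {T : Matrix ι ι Z} (hT : T * T = -T.trace • T) {v : Z} (hv : v * (1 + T.trace) = 1)
    (B : Matrix ι κ Z) (C : Matrix κ ι Z) (D : Matrix κ κ Z) :
    (Matrix.fromBlocks (1 - T) B C D).det = v * (D - C * (1 + v • T) * B).det := by
  have hinv : (1 - T) * (1 + v • T) = 1 := by
    have hcoeff : v - 1 + v * T.trace = 0 := by linear_combination hv
    calc (1 - T) * (1 + v • T) = 1 + (v - 1 + v * T.trace) • T := by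
          simp only [mul_add, sub_mul, mul_one, one_mul, Matrix.mul_smul, hT]
          module
      _ = 1 := by rw [hcoeff, zero_smul, add_zero]
  have hdet : (1 - T).det = v := by
    linear_combination v * det_one_sub_mul_one_add_trace hT - (1 - T).det * hv
  let : Invertible (1 - T) := ⟨1 + v • T, mul_eq_one_comm.mp hinv, hinv⟩
  rw [Matrix.det_fromBlocks₁₁, hdet]
  rfl

theorem det_one_add_smul_fromBlocks [IsAddTorsionFree Z] {T : Matrix ι ι Z}
    {B : Matrix ι (Fin 1) Z} {C : Matrix (Fin 1) ι Z} {D : Matrix (Fin 1) (Fin 1) Z}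
    {u w x y v s : Z} (hT : T * T = u • T) (htr : T.trace = -u) (hD : D 0 0 = w - u)
    (hCB : (C * B) 0 0 = x + u * w) (hCTB : (C * T * B) 0 0 = y) (hv : v * (1 - s * u) = 1) :
    (1 + s • Matrix.fromBlocks (-T) B C D).det
      = 1 + s * w - s ^ 2 * (x * v) - s ^ 3 * (y * v ^ 2) := by
  have htrs : (s • T).trace = -(s * u) := by simp [htr]
  have hTs : (s • T) * (s • T) = -(s • T).trace • (s • T) := by
    simp only [htrs, neg_neg, Matrix.smul_mul, Matrix.mul_smul, hT, smul_smul]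
    congr 1
    ring
  have hblocks : 1 + s • Matrix.fromBlocks (-T) B C D =
      Matrix.fromBlocks (1 - s • T) (s • B) (s • C) (1 + s • D) := by
    rw [Matrix.fromBlocks_smul, ← Matrix.fromBlocks_one, Matrix.fromBlocks_add]
    simp [sub_eq_add_neg]
  have hentry : (1 + s • D - (s • C) * (1 + v • s • T) * (s • B) : Matrix (Fin 1) (Fin 1) Z) 0 0 =
      1 + s * (w - u) - s ^ 2 * (x + u * w) - s ^ 3 * v * y := by
    rw [← hD, ← hCB, ← hCTB]
    simp only [Matrix.mul_add, Matrix.add_mul, Matrix.mul_one, Matrix.smul_mul, Matrix.mul_smul,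
      Matrix.sub_apply, Matrix.add_apply, Matrix.smul_apply, Matrix.one_apply_eq, smul_eq_mul]
    ring
  rw [hblocks, det_fromBlocks_one_sub hTs (v := v) (by rw [htrs]; linear_combination hv),
    Matrix.det_unique, Fin.default_eq_zero, hentry]
  linear_combination (1 + s * w) * hv

end Determinants

section Nilpotents

theorem sum_pow_card_add_one_eq_zero {ι S : Type*} [Semiring S] (s : Finset ι) (x : ι → S)
    (hcomm : ∀ i ∈ s, ∀ j ∈ s, Commute (x i) (x j)) (hsq : ∀ i ∈ s, x i ^ 2 = 0) :
    (∑ i ∈ s, x i) ^ (s.card + 1) = 0 := by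
  classical
  induction s using Finset.induction_on with
  | empty => simp
  | insert a s ha ih =>
    rw [Finset.sum_insert ha, Finset.card_insert_of_notMem ha]
    refine Commute.add_pow_eq_zero_of_add_le_succ_of_pow_eq_zero
      (Commute.sum_right _ _ _ fun j hj => hcomm a (by simp) j (by simp [hj]))
      (hsq a (by simp)) (ih (fun i hi j hj => hcomm i (by simp [hi]) j (by simp [hj]))
        fun i hi => hsq i (by simp [hi])) (by omega)

theorem one_sub_mul_sum_range_succ_mul_pow {S : Type*} [Ring S] (t : S) (N : ℕ) :
    (1 - t) * ∑ k ∈ Finset.range N, ((k : S) + 1) * t ^ k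
      = ∑ k ∈ Finset.range N, t ^ k - N * t ^ N := by
  induction N with
  | zero => simp
  | succ N ih =>
    have hcast : t * (((N : S) + 1) * t ^ N) = ((N : S) + 1) * t ^ (N + 1) := by
      rw [← Nat.cast_succ, ← mul_assoc, ← Nat.cast_comm, mul_assoc, pow_succ']
    rw [Finset.sum_range_succ, mul_add, ih, Finset.sum_range_succ, sub_mul, one_mul, hcast,
      Nat.cast_succ]
    noncomm_ring

theorem sum_range_succ_mul_pow_eq_geom_sum_sq {S : Type*} [CommRing S] {t : S} {N : ℕ}
    (ht : t ^ N = 0) :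
    ∑ k ∈ Finset.range N, ((k : S) + 1) * t ^ k = (∑ k ∈ Finset.range N, t ^ k) ^ 2 := by
  have hgeom := mul_neg_geom_sum t N
  have hsum := one_sub_mul_sum_range_succ_mul_pow t N
  rw [ht] at hgeom hsum
  linear_combination (∑ k ∈ Finset.range N, t ^ k) * hsum
    - (∑ k ∈ Finset.range N, ((k : S) + 1) * t ^ k) * hgeom

end Nilpotents

section CentralMatrices

variable {ι κ R A : Type*} [CommRing R] [Ring A] [Algebra R A]

theorem ndet_submatrix_map [Fintype ι] [DecidableEq ι] {Z : Type*} [CommRing Z] {m : ℕ}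
    (φ : Z →+* A) (e : Fin m ≃ ι) (M : Matrix ι ι Z) :
    ndet ((M.map φ).submatrix e e) = φ M.det := by
  rw [← Matrix.det_submatrix_equiv_self e, ndet, Matrix.det_apply, map_sum]
  refine Finset.sum_congr rfl fun σ _ => ?_
  rw [Units.smul_def, map_zsmul, Fin.prod_univ_def, map_list_prod, List.map_map]
  rfl

theorem exists_map_val_eq_of_mem_matrix {S : Subalgebra R A} {M : Matrix ι κ A}
    (hM : M ∈ S.toSubmodule.matrix) : ∃ M' : Matrix ι κ S, M'.map S.val = M :=
  ⟨fun i j => ⟨M i j, hM i j⟩, rfl⟩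

theorem det_one_add_smul_unipotent_conj {Z : Type*} [CommRing Z] [Fintype ι] [DecidableEq ι]
    [Fintype κ] [DecidableEq κ] (s : Z) (P : Matrix ι κ Z) (N : Matrix (ι ⊕ κ) (ι ⊕ κ) Z) :
    (1 + s • (Matrix.fromBlocks 1 (-P) 0 1 * N * Matrix.fromBlocks 1 P 0 1)).det
      = (1 + s • N).det := by
  have hinv : Matrix.fromBlocks 1 (-P) 0 1 * Matrix.fromBlocks 1 P 0 1
      = (1 : Matrix (ι ⊕ κ) (ι ⊕ κ) Z) := by
    simp [Matrix.fromBlocks_multiply]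
  rw [← Matrix.det_conj_of_mul_eq_one (N := 1 + s • N) hinv (mul_eq_one_comm.mp hinv), mul_add,
    add_mul, mul_one, hinv, Matrix.mul_smul, Matrix.smul_mul]

theorem det_one_add_smul_fromBlocks_of_pow_eq_zero {Z : Type*} [CommRing Z] [Algebra R Z]
    [IsAddTorsionFree Z] [Fintype ι] [DecidableEq ι] {T : Matrix ι ι Z}
    {B : Matrix ι (Fin 1) Z} {C : Matrix (Fin 1) ι Z} {D : Matrix (Fin 1) (Fin 1) Z}
    {u w x y : Z} (hT : T * T = u • T) (htr : T.trace = -u) (hD : D 0 0 = w - u)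
    (hCB : (C * B) 0 0 = x + u * w) (hCTB : (C * T * B) 0 0 = y) {N : ℕ} (hu : u ^ N = 0)
    (s : R) :
    (1 + algebraMap R Z s • Matrix.fromBlocks (-T) B C D).det
      = 1 + s • w - s ^ 2 • (x * ∑ k ∈ Finset.range N, s ^ k • u ^ k)
        - s ^ 3 • (y * ∑ k ∈ Finset.range N, ((k : R) + 1) • (s ^ k • u ^ k)) := by
  have hpow : (algebraMap R Z s * u) ^ N = 0 := by rw [mul_pow, hu, mul_zero]
  have hgeom : (∑ k ∈ Finset.range N, (algebraMap R Z s * u) ^ k) * (1 - algebraMap R Z s * u)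
      = 1 := by
    rw [geom_sum_mul_neg, hpow, sub_zero]
  rw [det_one_add_smul_fromBlocks hT htr hD hCB hCTB hgeom,
    ← sum_range_succ_mul_pow_eq_geom_sum_sq hpow]
  simp only [Algebra.smul_def, mul_pow, map_add, map_pow, map_natCast, map_one]

theorem ndet_one_add_smul_submatrix_map {Z : Type*} [CommRing Z] [Algebra R Z] [Fintype ι]
    [DecidableEq ι] {m : ℕ} (φ : Z →ₐ[R] A) (e : Fin m ≃ ι) (s : R) (M : Matrix ι ι Z) :
    ndet (1 + s • (M.map φ).submatrix e e) = φ (1 + algebraMap R Z s • M).det := by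
  have hmap : 1 + s • (M.map φ).submatrix e e
      = ((1 + algebraMap R Z s • M).map φ.toRingHom).submatrix e e := by
    ext i j
    have hone : (1 : Matrix ι ι Z) (e i) (e j) = if i = j then 1 else 0 := by
      simp [Matrix.one_apply]
    simp only [Matrix.add_apply, Matrix.smul_apply, Matrix.submatrix_apply, Matrix.map_apply, hone,
      Matrix.one_apply]
    simp [apply_ite φ, Algebra.smul_def]
  rw [hmap, ndet_submatrix_map]
  rfl

theorem ndet_one_add_smul_unipotent_conj_map [IsAddTorsionFree A] [Fintype ι] [DecidableEq ι]
    {Z : Type*} [CommRing Z] [Algebra R Z] {φ : Z →ₐ[R] A} (hφ : Function.Injective φ) {m : ℕ}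
    (e : Fin m ≃ ι ⊕ Fin 1) (P : Matrix ι (Fin 1) Z) {B : Matrix ι (Fin 1) Z} {T : Matrix ι ι Z}
    {C : Matrix (Fin 1) ι Z} {D : Matrix (Fin 1) (Fin 1) Z} {u w x y : A}
    (hT : T.map φ * T.map φ = u • T.map φ) (htr : (T.map φ).trace = -u)
    (hD : D.map φ 0 0 = w - u) (hCB : (C.map φ * B.map φ) 0 0 = x + u * w)
    (hCTB : (C.map φ * T.map φ * B.map φ) 0 0 = y) {N : ℕ} (hu : u ^ N = 0) (s : R) :
    ndet (1 + s • (Matrix.fromBlocks 1 (-P.map φ) 0 1 *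
        Matrix.fromBlocks (-T.map φ) (B.map φ) (C.map φ) (D.map φ) *
        Matrix.fromBlocks 1 (P.map φ) 0 1).submatrix e e)
      = 1 + s • w - s ^ 2 • (x * ∑ k ∈ Finset.range N, s ^ k • u ^ k)
        - s ^ 3 • (y * ∑ k ∈ Finset.range N, ((k : R) + 1) • (s ^ k • u ^ k)) := by
  have : IsAddTorsionFree Z := Function.Injective.isAddTorsionFree (φ : Z →+ A) hφ
  rw [← AddMonoidHom.map_trace φ] at htr
  simp only [← Matrix.map_mul, Matrix.map_apply] at hT hCB hCTB hD
  obtain ⟨u, rfl⟩ : ∃ u', φ u' = u := ⟨-T.trace, by rw [map_neg, htr, neg_neg]⟩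
  obtain ⟨w, rfl⟩ : ∃ w', φ w' = w := ⟨D 0 0 + u, by rw [map_add, hD, sub_add_cancel]⟩
  obtain ⟨x, rfl⟩ : ∃ x', φ x' = x :=
    ⟨(C * B) 0 0 - u * w, by rw [map_sub, hCB, map_mul, add_sub_cancel_right]⟩
  have hT' : T * T = u • T :=
    Matrix.map_injective hφ (hT.trans (Matrix.map_smul' _ _ _ (map_mul φ)).symm)
  have hblocks : Matrix.fromBlocks 1 (-P.map φ) 0 1 *
        Matrix.fromBlocks (-T.map φ) (B.map φ) (C.map φ) (D.map φ) *
        Matrix.fromBlocks 1 (P.map φ) 0 1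
      = (Matrix.fromBlocks 1 (-P) 0 1 * Matrix.fromBlocks (-T) B C D *
          Matrix.fromBlocks 1 P 0 1).map φ := by
    simp [Matrix.map_mul, Matrix.fromBlocks_map, Matrix.map_neg]
  rw [hblocks, ndet_one_add_smul_submatrix_map, det_one_add_smul_unipotent_conj,
    det_one_add_smul_fromBlocks_of_pow_eq_zero hT' (w := w) (x := x) (N := N)
      (hφ (by simp [htr])) (hφ (by simp [hD])) (hφ (by simp [hCB])) rfl (hφ (by simp [hu])),
    ← hCTB]
  simp

theorem ndet_one_add_smul_unipotent_conj [IsAddTorsionFree A] [Fintype ι] [DecidableEq ι] {m : ℕ}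
    (e : Fin m ≃ ι ⊕ Fin 1) {P B : Matrix ι (Fin 1) A} {T : Matrix ι ι A}
    {C : Matrix (Fin 1) ι A} {D : Matrix (Fin 1) (Fin 1) A}
    (hPc : P ∈ (Subalgebra.center R A).toSubmodule.matrix)
    (hTc : T ∈ (Subalgebra.center R A).toSubmodule.matrix)
    (hBc : B ∈ (Subalgebra.center R A).toSubmodule.matrix)
    (hCc : C ∈ (Subalgebra.center R A).toSubmodule.matrix)
    (hDc : D ∈ (Subalgebra.center R A).toSubmodule.matrix)
    {u w x y : A} (hT : T * T = u • T) (htr : T.trace = -u) (hD : D 0 0 = w - u)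
    (hCB : (C * B) 0 0 = x + u * w) (hCTB : (C * T * B) 0 0 = y) {N : ℕ} (hu : u ^ N = 0)
    (s : R) :
    ndet (1 + s • (Matrix.fromBlocks 1 (-P) 0 1 * Matrix.fromBlocks (-T) B C D *
        Matrix.fromBlocks 1 P 0 1).submatrix e e)
      = 1 + s • w - s ^ 2 • (x * ∑ k ∈ Finset.range N, s ^ k • u ^ k)
        - s ^ 3 • (y * ∑ k ∈ Finset.range N, ((k : R) + 1) • (s ^ k • u ^ k)) := by
  obtain ⟨P, rfl⟩ := exists_map_val_eq_of_mem_matrix hPc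
  obtain ⟨T, rfl⟩ := exists_map_val_eq_of_mem_matrix hTc
  obtain ⟨B, rfl⟩ := exists_map_val_eq_of_mem_matrix hBc
  obtain ⟨C, rfl⟩ := exists_map_val_eq_of_mem_matrix hCc
  obtain ⟨D, rfl⟩ := exists_map_val_eq_of_mem_matrix hDc
  exact ndet_one_add_smul_unipotent_conj_map (φ := (Subalgebra.center R A).val)
    Subtype.val_injective e P hT htr hD hCB hCTB hu s

end CentralMatrices

section GradedDerivations

variable {R A : Type*} [CommRing R] [Ring A] [Algebra R A]

/-- Graded commutativity of an algebra with respect to a family of submodules `𝒜`: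
homogeneous elements commute up to the Koszul sign. -/
def IsGradedCommutative (𝒜 : ℕ → Submodule R A) : Prop :=
  ∀ (m m' : ℕ) (x y : A), x ∈ 𝒜 m → y ∈ 𝒜 m' → x * y = ((-1 : ℤ) ^ (m * m')) • (y * x)

/-- An antiderivation of degree `+1` of a graded algebra, such as `∂` and `∂̄` on differential
forms. -/
structure IsGradedDerivation (𝒜 : ℕ → Submodule R A) (D : A →ₗ[R] A) : Prop where
  map_mem : ∀ (m : ℕ) (x : A), x ∈ 𝒜 m → D x ∈ 𝒜 (m + 1)
  leibniz : ∀ (m : ℕ) (x y : A), x ∈ 𝒜 m → D (x * y) = D x * y + ((-1 : ℤ) ^ m) • (x * D y)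

variable {𝒜 : ℕ → Submodule R A} {ι κ τ : Type*} {m m' : ℕ}

theorem mul_mem_matrix [SetLike.GradedMul 𝒜] [Fintype κ] {M : Matrix ι κ A} {N : Matrix κ τ A}
    (hM : M ∈ (𝒜 m).matrix) (hN : N ∈ (𝒜 m').matrix) : M * N ∈ (𝒜 (m + m')).matrix :=
  fun i j => Submodule.sum_mem _ fun k _ => SetLike.mul_mem_graded (hM i k) (hN k j)

theorem matrix_map_map_eq_zero {D : A →ₗ[R] A} (hDD : ∀ x, D (D x) = 0) (M : Matrix ι κ A) :
    (M.map D).map D = 0 := by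
  ext i j
  exact hDD _

theorem mem_zero_of_mul_eq_one [GradedAlgebra 𝒜] {x y : A} (hx : x ∈ 𝒜 0) (hyx : y * x = 1)
    (hxy : x * y = 1) : y ∈ 𝒜 0 := by
  have hproj : x * (DirectSum.decompose 𝒜 y 0 : A) = 1 := by
    rw [← DirectSum.coe_decompose_mul_of_left_mem_zero 𝒜 hx, hxy,
      DirectSum.decompose_of_mem_same 𝒜 SetLike.GradedOne.one_mem]
  rw [left_inv_eq_right_inv hyx hproj]
  exact SetLike.coe_mem _

namespace IsGradedCommutative

theorem mem_center [GradedAlgebra 𝒜] (h𝒜 : IsGradedCommutative 𝒜) (hm : Even m) {x : A}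
    (hx : x ∈ 𝒜 m) : x ∈ Subalgebra.center R A := by
  refine Subalgebra.mem_center_iff.mpr fun y => ?_
  induction y using DirectSum.Decomposition.inductionOn 𝒜 with
  | zero => simp
  | homogeneous y => rw [h𝒜 _ m _ x y.2 hx, (hm.mul_left _).neg_one_pow, one_smul]
  | add y z hy hz => rw [add_mul, mul_add, hy, hz]

theorem mem_matrix_center [GradedAlgebra 𝒜] (h𝒜 : IsGradedCommutative 𝒜) (hm : Even m)
    {M : Matrix ι κ A} (hM : M ∈ (𝒜 m).matrix) :
    M ∈ (Subalgebra.center R A).toSubmodule.matrix :=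
  fun i j => h𝒜.mem_center hm (hM i j)

theorem mul_self_eq_zero [IsAddTorsionFree A] (h𝒜 : IsGradedCommutative 𝒜) (hm : Odd m) {x : A}
    (hx : x ∈ 𝒜 m) : x * x = 0 := by
  have hneg := h𝒜 m m x x hx hx
  rwa [(hm.mul hm).neg_one_pow, neg_smul, one_smul, self_eq_neg] at hneg

theorem trace_mul_comm [Fintype ι] [Fintype κ] (h𝒜 : IsGradedCommutative 𝒜) {M : Matrix ι κ A}
    {N : Matrix κ ι A} (hM : M ∈ (𝒜 m).matrix) (hN : N ∈ (𝒜 m').matrix) :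
    (M * N).trace = ((-1 : ℤ) ^ (m * m')) • (N * M).trace := by
  simp only [Matrix.trace, Matrix.diag_apply, Matrix.mul_apply, Finset.smul_sum]
  rw [Finset.sum_comm]
  exact Finset.sum_congr rfl fun k _ =>
    Finset.sum_congr rfl fun i _ => h𝒜 m m' _ _ (hM i k) (hN k i)

theorem sum_mul_pow_card_add_one_eq_zero [GradedAlgebra 𝒜] [IsAddTorsionFree A]
    (h𝒜 : IsGradedCommutative 𝒜) (hm : Odd m) (hm' : Odd m') (s : Finset ι) {a b : ι → A}
    (ha : ∀ i ∈ s, a i ∈ 𝒜 m) (hb : ∀ i ∈ s, b i ∈ 𝒜 m') :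
    (∑ i ∈ s, a i * b i) ^ (s.card + 1) = 0 := by
  have hcenter (i) (hi : i ∈ s) (y : A) : Commute y (a i * b i) :=
    Subalgebra.mem_center_iff.mp (h𝒜.mem_center (hm.add_odd hm')
      (SetLike.mul_mem_graded (ha i hi) (hb i hi))) y
  refine sum_pow_card_add_one_eq_zero s _ (fun i _ j hj => hcenter j hj _) fun i hi => ?_
  calc (a i * b i) ^ 2 = a i * (a i * b i) * b i := by
        rw [sq, mul_assoc, (hcenter i hi (b i)).eq, ← mul_assoc]
    _ = 0 := by rw [← mul_assoc, h𝒜.mul_self_eq_zero hm (ha i hi), zero_mul, zero_mul]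

end IsGradedCommutative

namespace IsGradedDerivation

variable {D : A →ₗ[R] A}

theorem map_one [SetLike.GradedOne 𝒜] (hD : IsGradedDerivation 𝒜 D) : D 1 = 0 := by
  simpa using hD.leibniz 0 1 1 SetLike.GradedOne.one_mem

theorem map_mem_matrix (hD : IsGradedDerivation 𝒜 D) {M : Matrix ι κ A} (hM : M ∈ (𝒜 m).matrix) :
    M.map D ∈ (𝒜 (m + 1)).matrix :=
  fun i j => hD.map_mem m _ (hM i j)

theorem map_matrix_mul [Fintype κ] (hD : IsGradedDerivation 𝒜 D) {M : Matrix ι κ A}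
    (hM : M ∈ (𝒜 m).matrix) (N : Matrix κ τ A) :
    (M * N).map D = M.map D * N + ((-1 : ℤ) ^ m) • (M * N.map D) := by
  ext i j
  simp only [Matrix.map_apply, Matrix.mul_apply, Matrix.add_apply, Matrix.smul_apply, map_sum,
    Finset.smul_sum, ← Finset.sum_add_distrib]
  exact Finset.sum_congr rfl fun k _ => hD.leibniz m _ _ (hM i k)

theorem map_inv_mul_map (hD : IsGradedDerivation 𝒜 D) (hDD : ∀ x, D (D x) = 0) {E E' : A}
    (hE : E ∈ 𝒜 0) (hE'E : E' * E = 1) (hEE' : E * E' = 1) (x : A) :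
    D (E' * D x) = -(E' * D E * (E' * D x)) := by
  have hzero : D E * (E' * D x) + E * D (E' * D x) = 0 := by
    calc D E * (E' * D x) + E * D (E' * D x) = D (E * (E' * D x)) := by
          rw [hD.leibniz 0 _ _ hE, pow_zero, one_smul]
      _ = 0 := by rw [← mul_assoc, hEE', one_mul, hDD]
  calc D (E' * D x) = E' * (E * D (E' * D x)) := by rw [← mul_assoc, hE'E, one_mul]
    _ = -(E' * D E * (E' * D x)) := by
        rw [eq_neg_of_add_eq_zero_right hzero, mul_neg, mul_assoc]

end IsGradedDerivation

end GradedDerivations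

section Curvature

variable {R A ι κ : Type*} [CommRing R] [Ring A] [Algebra R A]
  {𝒜 : ℕ → Submodule R A} {D Dbar : A →ₗ[R] A} {E β : Matrix κ κ A}
  {f α : Matrix κ ι A} {p : Matrix ι κ A}

variable [Fintype ι]

/-- The Gram matrix `[[1, p], [f, f p + E]]` of the Hermitian metrics under consideration, with
blocks of arbitrary size; `hMat` is the case of a `1 × 1` block `E`. -/
def hermitianBlock [DecidableEq ι] (E : Matrix κ κ A) (f : Matrix κ ι A) (p : Matrix ι κ A) :
    Matrix (ι ⊕ κ) (ι ⊕ κ) A :=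
  Matrix.fromBlocks 1 p f (f * p + E)

/-- The Chern connection form `h⁻¹ ∂h` of `h = hermitianBlock E f p`, written in terms of
`α = E⁻¹ ∂f` and `β = E⁻¹ ∂E`. -/
def connectionForm [Fintype κ] (D : A →ₗ[R] A) (p : Matrix ι κ A) (α : Matrix κ ι A)
    (β : Matrix κ κ A) : Matrix (ι ⊕ κ) (ι ⊕ κ) A :=
  Matrix.fromBlocks (-(p * α)) (p.map D - p * (α * p + β)) α (α * p + β)

theorem hermitianBlock_mul_connectionForm [Fintype κ] [DecidableEq ι] [SetLike.GradedOne 𝒜]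
    (hD : IsGradedDerivation 𝒜 D) (hf : f ∈ (𝒜 0).matrix) (hα : E * α = f.map D)
    (hβ : E * β = E.map D) :
    hermitianBlock E f p * connectionForm D p α β = (hermitianBlock E f p).map D := by
  have hcorner : (f * p + E).map D = f.map D * p + f * p.map D + E.map D := by
    rw [Matrix.map_add _ D.map_add, hD.map_matrix_mul hf, pow_zero, one_smul]
  have hone : (1 : Matrix ι ι A).map D = 0 := by
    ext i j
    simp [Matrix.one_apply, apply_ite D, hD.map_one]
  rw [hermitianBlock, connectionForm, Matrix.fromBlocks_multiply, Matrix.fromBlocks_map, hcorner,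
    hone, ← hα, ← hβ]
  simp only [Matrix.mul_add, Matrix.add_mul, Matrix.mul_sub, Matrix.mul_neg, Matrix.mul_assoc,
    Matrix.one_mul]
  congr 1 <;> abel

theorem connectionForm_map [Fintype κ] [DecidableEq ι] [DecidableEq κ]
    (hDbar : IsGradedDerivation 𝒜 Dbar) (hp : p ∈ (𝒜 0).matrix) (hα : α ∈ (𝒜 1).matrix) :
    (connectionForm D p α β).map Dbar
      = Matrix.fromBlocks 1 (-p) 0 1 *
        Matrix.fromBlocks (-(p.map Dbar * α)) ((p.map D).map Dbar - p.map Dbar * β) (α.map Dbar)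
          (β.map Dbar - α * p.map Dbar) *
        Matrix.fromBlocks 1 p 0 1 := by
  have hαp : (α * p).map Dbar = α.map Dbar * p - α * p.map Dbar := by
    rw [hDbar.map_matrix_mul hα, pow_one, neg_smul, one_smul, sub_eq_add_neg]
  rw [connectionForm, Matrix.fromBlocks_map, Matrix.fromBlocks_multiply,
    Matrix.fromBlocks_multiply]
  simp only [Matrix.map_neg _ Dbar.map_neg, Matrix.map_sub _ Dbar.map_sub,
    Matrix.map_add _ Dbar.map_add, hDbar.map_matrix_mul hp, hαp, pow_zero, one_smul]
  simp only [Matrix.mul_add, Matrix.add_mul, Matrix.mul_sub, Matrix.mul_neg, Matrix.neg_mul,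
    Matrix.mul_assoc, Matrix.one_mul, Matrix.mul_one, Matrix.zero_mul, Matrix.mul_zero]
  congr 1 <;> abel

theorem map_mul_map_eq_mul_sub [Fintype κ] (hD : IsGradedDerivation 𝒜 D)
    (hDDbar : ∀ x, D (Dbar x) + Dbar (D x) = 0) (hα : α ∈ (𝒜 1).matrix)
    (hDα : α.map D = -(β * α)) (hcomm : Commute β (α * p.map Dbar)) :
    (α * p.map Dbar).map D = α * ((p.map D).map Dbar - p.map Dbar * β) := by
  have hanti : (p.map Dbar).map D = -(p.map D).map Dbar := by
    ext i j
    exact eq_neg_of_add_eq_zero_left (hDDbar _)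
  rw [hD.map_matrix_mul hα, hDα, hanti, pow_one, neg_smul, one_smul, Matrix.neg_mul,
    Matrix.mul_assoc, hcomm.eq, Matrix.mul_neg, Matrix.mul_sub, Matrix.mul_assoc]
  abel

theorem map_mul_map_of_sq_eq_zero (hDbar : IsGradedDerivation 𝒜 Dbar)
    (hDbarDbar : ∀ x, Dbar (Dbar x) = 0) (hα : α ∈ (𝒜 1).matrix) :
    (α * p.map Dbar).map Dbar = α.map Dbar * p.map Dbar := by
  rw [hDbar.map_matrix_mul hα, matrix_map_map_eq_zero hDbarDbar, Matrix.mul_zero, smul_zero,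
    add_zero]

theorem map_mul_map_map_sub [Fintype κ] (hDbar : IsGradedDerivation 𝒜 Dbar)
    (hDbarDbar : ∀ x, Dbar (Dbar x) = 0) (hp : p ∈ (𝒜 0).matrix) (hα : α ∈ (𝒜 1).matrix) :
    α.map Dbar * ((p.map D).map Dbar - p.map Dbar * β)
      = (α * ((p.map D).map Dbar - p.map Dbar * β)).map Dbar + α * p.map Dbar * β.map Dbar := by
  rw [hDbar.map_matrix_mul hα, Matrix.map_sub _ Dbar.map_sub,
    hDbar.map_matrix_mul (hDbar.map_mem_matrix hp), matrix_map_map_eq_zero hDbarDbar,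
    matrix_map_map_eq_zero hDbarDbar]
  simp [Matrix.mul_assoc]

theorem mul_mul_self_eq_smul {α : Matrix (Fin 1) ι A} {q : Matrix ι (Fin 1) A} {u : A}
    (hu : (α * q) 0 0 = u) (hcenter : u ∈ Subalgebra.center R A) :
    (q * α) * (q * α) = u • (q * α) := by
  have hα : (α * q) * α = u • α := by
    ext i j
    rw [Subsingleton.elim i 0, Matrix.mul_apply, Fin.sum_univ_one, hu, Matrix.smul_apply,
      smul_eq_mul]
  have hq : q * (u • α) = u • (q * α) := by
    ext i j
    simp only [Matrix.mul_apply, Fin.sum_univ_one, Matrix.smul_apply, smul_eq_mul]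
    rw [← mul_assoc, Subalgebra.mem_center_iff.mp hcenter, mul_assoc]
  rw [Matrix.mul_assoc, ← Matrix.mul_assoc α, hα, hq]

theorem ndet_one_add_smul_curvature [GradedAlgebra 𝒜] [IsAddTorsionFree A]
    (h𝒜 : IsGradedCommutative 𝒜) (hD : IsGradedDerivation 𝒜 D) (hDbar : IsGradedDerivation 𝒜 Dbar)
    (hDbarDbar : ∀ x, Dbar (Dbar x) = 0) (hDDbar : ∀ x, D (Dbar x) + Dbar (D x) = 0)
    {p : Matrix ι (Fin 1) A} {α : Matrix (Fin 1) ι A} {β : Matrix (Fin 1) (Fin 1) A}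
    (hp : p ∈ (𝒜 0).matrix) (hα : α ∈ (𝒜 1).matrix) (hβ : β ∈ (𝒜 1).matrix)
    (hDα : α.map D = -(β * α)) {u : A} (hu : (α * p.map Dbar) 0 0 = u) {N : ℕ} (huN : u ^ N = 0)
    {m : ℕ} (e : Fin m ≃ ι ⊕ Fin 1) (s : R) :
    ndet (1 + s • ((connectionForm D p α β).map Dbar).submatrix e e)
      = 1 + s • Dbar (β 0 0) - s ^ 2 • (Dbar (D u) * ∑ k ∈ Finset.range N, s ^ k • u ^ k)
        - s ^ 3 • (Dbar u * D u * ∑ k ∈ Finset.range N, ((k : R) + 1) • (s ^ k • u ^ k)) := by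
  classical
  have hq : p.map Dbar ∈ (𝒜 1).matrix := hDbar.map_mem_matrix hp
  have huc : u ∈ Subalgebra.center R A := hu ▸ h𝒜.mem_center even_two (mul_mem_matrix hα hq 0 0)
  have hcomm : Commute β (α * p.map Dbar) := by
    ext i j
    rw [Subsingleton.elim i 0, Subsingleton.elim j 0]
    simp only [Matrix.mul_apply (M := β), Matrix.mul_apply (N := β), Fin.sum_univ_one]
    rw [hu, Subalgebra.mem_center_iff.mp huc]
  have hDu := map_mul_map_eq_mul_sub hD hDDbar hα hDα hcomm
  rw [connectionForm_map hDbar hp hα]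
  refine ndet_one_add_smul_unipotent_conj e (h𝒜.mem_matrix_center Even.zero hp)
    (h𝒜.mem_matrix_center even_two (mul_mem_matrix hq hα))
    (h𝒜.mem_matrix_center even_two (sub_mem
      (hDbar.map_mem_matrix (hD.map_mem_matrix hp)) (mul_mem_matrix hq hβ)))
    (h𝒜.mem_matrix_center even_two (hDbar.map_mem_matrix hα))
    (h𝒜.mem_matrix_center even_two (sub_mem (hDbar.map_mem_matrix hβ) (mul_mem_matrix hα hq)))
    (mul_mul_self_eq_smul hu huc) ?_ ?_ ?_ ?_ huN s
  · rw [h𝒜.trace_mul_comm hq hα, Matrix.trace_fin_one, hu, mul_one, pow_one, neg_smul, one_smul]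
  · rw [Matrix.sub_apply, hu, Matrix.map_apply]
  · rw [map_mul_map_map_sub hDbar hDbarDbar hp hα, ← hDu, Matrix.add_apply, Matrix.mul_apply,
      Fin.sum_univ_one]
    simp only [Matrix.map_apply, hu]
  · rw [← Matrix.mul_assoc, Matrix.mul_assoc, ← hDu,
      ← map_mul_map_of_sq_eq_zero hDbar hDbarDbar hα, Matrix.mul_apply, Fin.sum_univ_one]
    simp only [Matrix.map_apply, hu]

end Curvature

section SpecialMetric

variable {R A : Type*} [Ring A] {n : ℕ} {E E' : A} {f p : Fin n → A}

theorem hMat_eq_submatrix_hermitianBlock :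
    hMat E f p = (hermitianBlock !![E] (Matrix.replicateRow (Fin 1) f)
      (Matrix.replicateCol (Fin 1) p)).submatrix finSumFinEquiv.symm finSumFinEquiv.symm := by
  ext i j
  obtain ⟨i, rfl⟩ := finSumFinEquiv.surjective i
  obtain ⟨j, rfl⟩ := finSumFinEquiv.surjective j
  rcases i with i | i <;> rcases j with j | j <;>
    simp [hMat, hermitianBlock, Matrix.one_apply, Matrix.mul_apply, Fin.ext_iff]

variable [CommRing R] [Algebra R A] {𝒜 : ℕ → Submodule R A} {D Dbar : A →ₗ[R] A}
  {hinv : Matrix (Fin (n + 1)) (Fin (n + 1)) A}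

theorem inv_mul_map_hMat [SetLike.GradedOne 𝒜] (hD : IsGradedDerivation 𝒜 D)
    (hEE' : E * E' = 1) (hf : ∀ i, f i ∈ 𝒜 0) (hinvl : hinv * hMat E f p = 1) :
    hinv * (hMat E f p).map D =
      (connectionForm D (Matrix.replicateCol (Fin 1) p)
        (Matrix.replicateRow (Fin 1) fun i => E' * D (f i))
        !![E' * D E]).submatrix finSumFinEquiv.symm finSumFinEquiv.symm := by
  have hα : !![E] * Matrix.replicateRow (Fin 1) (fun i => E' * D (f i))
      = (Matrix.replicateRow (Fin 1) f).map D := by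
    ext i j
    simp [Matrix.mul_apply, ← mul_assoc, hEE']
  have hβ : !![E] * !![E' * D E] = !![E].map D := by
    ext i j
    simp [Matrix.mul_apply, ← mul_assoc, hEE']
  have hf' : Matrix.replicateRow (Fin 1) f ∈ (𝒜 0).matrix := fun _ i => hf i
  rw [hMat_eq_submatrix_hermitianBlock] at hinvl ⊢
  rw [← Matrix.submatrix_map, ← hermitianBlock_mul_connectionForm hD hf' hα hβ,
    ← Matrix.submatrix_mul_equiv _ _ _ finSumFinEquiv.symm, ← Matrix.mul_assoc, hinvl,
    Matrix.one_mul]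

/-- Taking `R = ℂ` and `s = √−1 / 2π` gives the total Chern form of complex differential
forms. -/
theorem bott_chern_main_lemma_general [IsAddTorsionFree A] [GradedAlgebra 𝒜]
    (h𝒜 : IsGradedCommutative 𝒜) (hD : IsGradedDerivation 𝒜 D) (hDbar : IsGradedDerivation 𝒜 Dbar)
    (hDD : ∀ x, D (D x) = 0) (hDbarDbar : ∀ x, Dbar (Dbar x) = 0)
    (hDDbar : ∀ x, D (Dbar x) + Dbar (D x) = 0) (hE : E ∈ 𝒜 0) (hEE' : E * E' = 1)
    (hf : ∀ i, f i ∈ 𝒜 0) (hp : ∀ i, p i ∈ 𝒜 0) (hinvl : hinv * hMat E f p = 1) {U : A}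
    (hU : U = E' * ∑ i, D (f i) * Dbar (p i)) :
    U ^ (n + 1) = 0 ∧ ∀ s : R,
      ndet (1 + s • (hinv * (hMat E f p).map D).map Dbar)
        = 1 + s • Dbar (E' * D E)
          - s ^ 2 • (Dbar (D U) * ∑ k ∈ Finset.range (n + 1), s ^ k • U ^ k)
          - s ^ 3 • (Dbar U * D U *
              ∑ k ∈ Finset.range (n + 1), ((k : R) + 1) • (s ^ k • U ^ k)) := by
  have hE'E : E' * E = 1 := by
    rw [← hEE', Subalgebra.mem_center_iff.mp (h𝒜.mem_center Even.zero hE)]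
  have hE' : E' ∈ 𝒜 0 := mem_zero_of_mul_eq_one hE hE'E hEE'
  have hα (i : Fin n) : E' * D (f i) ∈ 𝒜 1 := SetLike.mul_mem_graded hE' (hD.map_mem 0 _ (hf i))
  have hβ : E' * D E ∈ 𝒜 1 := SetLike.mul_mem_graded hE' (hD.map_mem 0 _ hE)
  have hUsum : ∑ i, E' * D (f i) * Dbar (p i) = U := by
    simp only [hU, Finset.mul_sum, mul_assoc]
  have hnil : U ^ (n + 1) = 0 := by
    simpa [hUsum] using h𝒜.sum_mul_pow_card_add_one_eq_zero odd_one odd_one Finset.univ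
      (fun i _ => hα i) fun i _ => hDbar.map_mem 0 _ (hp i)
  refine ⟨hnil, fun s => ?_⟩
  rw [inv_mul_map_hMat hD hEE' hf hinvl]
  have hDα : (Matrix.replicateRow (Fin 1) fun i => E' * D (f i)).map D
      = -(!![E' * D E] * Matrix.replicateRow (Fin 1) fun i => E' * D (f i)) := by
    ext i j
    rw [Matrix.neg_apply, Matrix.mul_apply]
    simpa using hD.map_inv_mul_map hDD hE hE'E hEE' (f j)
  exact ndet_one_add_smul_curvature h𝒜 hD hDbar hDbarDbar hDDbar (fun i _ => hp i)
    (fun _ i => hα i) (Fin.forall_fin_one.mpr <| Fin.forall_fin_one.mpr hβ) hDα hUsum hnil _ s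

end SpecialMetric

/-- algebraic form of Lemma 3.2, the 'Main' lemma of the paper.
In an `ℕ`-graded graded-commutative `ℚ`-algebra `A` with anticommuting
square-zero degree-`+1` graded derivations `∂ = D` and `∂̄ = Dbar`, let
`E ∈ A₀` be invertible (with inverse `E'`), `f_i, p_i ∈ A₀` (`1 ≤ i ≤ n`,
`r = n + 1 ≥ 2`), let `h` be the special `r × r` matrix `hMat E f p`
(which is invertible with inverse `hinv`, `det h = E`), let
`Θ = ∂̄(h⁻¹·∂h)` and `U = E⁻¹·∑ᵢ ∂f_i·∂̄p_i`.  Then `U^r = 0` and for every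
`λ ∈ ℚ`,
`det(1 + λΘ) = 1 + λ·∂̄(E⁻¹∂E) - λ²·∂̄∂U·∑_{k<r} λ^k U^k
                - λ³·∂̄U·∂U·∑_{k<r} (k+1) λ^k U^k`. -/
theorem bott_chern_main_lemma
    {A : Type*} [Ring A] [Algebra ℚ A]
    (𝒜 : ℕ → Submodule ℚ A) [GradedAlgebra 𝒜]
    (hcomm : ∀ (m m' : ℕ) (x y : A), x ∈ 𝒜 m → y ∈ 𝒜 m' →
      x * y = ((-1 : ℤ) ^ (m * m')) • (y * x))
    (D Dbar : A →ₗ[ℚ] A)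
    (hDdeg : ∀ (m : ℕ) (x : A), x ∈ 𝒜 m → D x ∈ 𝒜 (m + 1))
    (hDbardeg : ∀ (m : ℕ) (x : A), x ∈ 𝒜 m → Dbar x ∈ 𝒜 (m + 1))
    (hDleib : ∀ (m : ℕ) (x y : A), x ∈ 𝒜 m →
      D (x * y) = D x * y + ((-1 : ℤ) ^ m) • (x * D y))
    (hDbarleib : ∀ (m : ℕ) (x y : A), x ∈ 𝒜 m →
      Dbar (x * y) = Dbar x * y + ((-1 : ℤ) ^ m) • (x * Dbar y))
    (hDD : ∀ x, D (D x) = 0)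
    (hDbarDbar : ∀ x, Dbar (Dbar x) = 0)
    (hDDbar : ∀ x, D (Dbar x) + Dbar (D x) = 0)
    (n : ℕ) (hn : 1 ≤ n)
    (E E' : A) (hE : E ∈ 𝒜 0) (hEE' : E * E' = 1) (hE'E : E' * E = 1)
    (f p : Fin n → A) (hf : ∀ i, f i ∈ 𝒜 0) (hp : ∀ i, p i ∈ 𝒜 0)
    (hinv : Matrix (Fin (n + 1)) (Fin (n + 1)) A)
    (hinvl : hinv * hMat E f p = 1) (hinvr : hMat E f p * hinv = 1)
    (Θ : Matrix (Fin (n + 1)) (Fin (n + 1)) A)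
    (hΘ : Θ = ((hinv * (hMat E f p).map ⇑D).map ⇑Dbar))
    (U : A) (hU : U = E' * ∑ i, D (f i) * Dbar (p i)) :
    U ^ (n + 1) = 0 ∧
    ∀ lam : ℚ,
      ndet ((1 : Matrix (Fin (n + 1)) (Fin (n + 1)) A) + lam • Θ)
        = 1 + lam • Dbar (E' * D E)
          - lam ^ 2 • (Dbar (D U) * ∑ k ∈ Finset.range (n + 1), lam ^ k • U ^ k)
          - lam ^ 3 • (Dbar U * D U *
              ∑ k ∈ Finset.range (n + 1), ((k : ℚ) + 1) • (lam ^ k • U ^ k)) := by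
  have : IsAddTorsionFree A := IsAddTorsionFree.of_module_rat A
  subst hΘ
  exact bott_chern_main_lemma_general hcomm ⟨hDdeg, hDleib⟩ ⟨hDbardeg, hDbarleib⟩ hDD hDbarDbar
    hDDbar hE hEE' hf hp hinvl hU
end
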